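/- arXiv:2403.18809 — 8 statements merged into one kernel-verified Lean document; each statement's English description precedes it below -/
import Mathlib

section
/- Let k be a strictly positive definite symmetric kernel on a set X with native space N(X), let 𝒳 = {x_1,…,x_N} ⊂ X be pairwise distinct centers, and define the extended interpolation operator S̃_𝒳 f := Σ_{j=1}^N (K_{𝒳,𝒳}^{-1} f_𝒳)_j Φ_{x_j} for bounded functions f : X → ℝ. Then ‖S̃_𝒳 f‖_{N(X)} ≤ ‖K_{𝒳,𝒳}^{-1}‖_{∞→1}^{1/2} · sup_{x∈X} |f(x)|, where ‖M‖_{∞→1} denotes the operator norm of the matrix M from (ℝ^N, ‖·‖_∞) to (ℝ^N, ‖·‖_1). In particular, S̃_𝒳 is a bounded linear operator from the bounded functions on X (with sup-norm) into V_𝒳, extending the orthogonal projection S_𝒳. -/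
open scoped RealInnerProductSpace
open Matrix

/-- `H` is a native space (RKHS) of the kernel `k` on `X`. -/
structure IsNativeSpace {X H : Type*} [NormedAddCommGroup H] [InnerProductSpace ℝ H]
    (k : X → X → ℝ) (ev : H →ₗ[ℝ] (X → ℝ)) (Φ : X → H) : Prop where
  injective : Function.Injective ev
  feature : ∀ x y : X, ev (Φ x) y = k y x
  repro : ∀ (f : H) (x : X), ev f x = ⟪f, Φ x⟫

/-- `k` is a symmetric strictly positive definite kernel. -/
def IsStrictPosDefKernel {X : Type*} (k : X → X → ℝ) : Prop :=
  (∀ x y, k x y = k y x) ∧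
  ∀ (n : ℕ) (x : Fin n → X), Function.Injective x →
    (Matrix.of fun i j : Fin n => k (x i) (x j)).PosDef

/-- the extended interpolation operator
`S̃_𝒳 f = ∑ j (K⁻¹ f_𝒳)_j Φ_{x_j}` on bounded functions satisfies
`‖S̃_𝒳 f‖_{N(X)} ≤ ‖K⁻¹‖_{∞→1}^{1/2} · sup_x |f(x)|`, and it extends the orthogonal
projection `S_𝒳`. Here `‖K⁻¹‖_{∞→1}` is the operator norm from `(ℝ^N, ‖·‖_∞)` to
`(ℝ^N, ‖·‖_1)`, expressed as the supremum of `‖K⁻¹ v‖_1` over the unit ball of `‖·‖_∞`. -/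
theorem extended_interpolation_operator_bound
    {X H : Type*} [NormedAddCommGroup H] [InnerProductSpace ℝ H] [CompleteSpace H]
    (k : X → X → ℝ) (ev : H →ₗ[ℝ] (X → ℝ)) (Φ : X → H)
    (hN : IsNativeSpace k ev Φ) (hk : IsStrictPosDefKernel k)
    {N : ℕ} (𝒳 : Fin N → X) (h𝒳 : Function.Injective 𝒳)
    (V : Submodule ℝ H) (hV : V = Submodule.span ℝ (Set.range fun i => Φ (𝒳 i)))
    (K : Matrix (Fin N) (Fin N) ℝ) (hK : ∀ i j, K i j = k (𝒳 i) (𝒳 j))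
    -- `S` is the orthogonal projection of `H` onto `V`
    (S : H → H) (hSmem : ∀ f, S f ∈ V) (hSorth : ∀ f, ∀ v ∈ V, ⟪f - S f, v⟫ = (0 : ℝ)) :
    (∀ f : X → ℝ, BddAbove (Set.range fun x => |f x|) →
      ‖∑ j, (K⁻¹ *ᵥ fun i => f (𝒳 i)) j • Φ (𝒳 j)‖ ≤
        Real.sqrt (sSup {c : ℝ | ∃ v : Fin N → ℝ,
            (∀ i, |v i| ≤ 1) ∧ c = ∑ i, |(K⁻¹ *ᵥ v) i|}) * ⨆ x, |f x|) ∧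
    ∀ g : H, ∑ j, (K⁻¹ *ᵥ fun i => ev g (𝒳 i)) j • Φ (𝒳 j) = S g := by
  have hKpd : K.PosDef := by
    have h := hk.2 N 𝒳 h𝒳
    have e : K = Matrix.of fun i j : Fin N => k (𝒳 i) (𝒳 j) := by
      ext i j; simp [hK]
    rw [e]; exact h
  have hdet : IsUnit K.det := hKpd.det_pos.ne'.isUnit
  have hinner : ∀ (v : Fin N → ℝ) (i : Fin N),
      ⟪∑ j, (K⁻¹ *ᵥ v) j • Φ (𝒳 j), Φ (𝒳 i)⟫ = v i := by
    intro v i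
    have h1 : (K *ᵥ (K⁻¹ *ᵥ v)) i = v i := by
      rw [Matrix.mulVec_mulVec, Matrix.mul_nonsing_inv _ hdet, Matrix.one_mulVec]
    rw [← h1, sum_inner]
    conv_rhs => rw [Matrix.mulVec, dotProduct]
    refine Finset.sum_congr rfl fun j _ => ?_
    rw [real_inner_smul_left, ← hN.repro, hN.feature, hK, mul_comm]
  refine ⟨?_, ?_⟩
  · intro f hf
    set v : Fin N → ℝ := fun i => f (𝒳 i) with hv
    set c : Fin N → ℝ := K⁻¹ *ᵥ v with hc
    set M : ℝ := ⨆ x, |f x| with hM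
    set A : Set ℝ := {c : ℝ | ∃ v : Fin N → ℝ,
            (∀ i, |v i| ≤ 1) ∧ c = ∑ i, |(K⁻¹ *ᵥ v) i|} with hA
    have hM0 : 0 ≤ M := Real.iSup_nonneg fun x => abs_nonneg _
    have hvM : ∀ i, |v i| ≤ M := fun i => le_ciSup hf (𝒳 i)
    have hAb : BddAbove A := by
      refine ⟨∑ i, ∑ j, |K⁻¹ i j|, ?_⟩
      rintro _ ⟨w, hw, rfl⟩
      refine Finset.sum_le_sum fun i _ => ?_
      rw [Matrix.mulVec, dotProduct]
      refine (Finset.abs_sum_le_sum_abs _ _).trans (Finset.sum_le_sum fun j _ => ?_)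
      rw [abs_mul]
      exact mul_le_of_le_one_right (abs_nonneg _) (hw j)
    have hA0 : 0 ≤ sSup A := by
      refine Real.sSup_nonneg ?_
      rintro _ ⟨w, hw, rfl⟩
      positivity
    have hcs : ∑ j, |c j| ≤ sSup A * M := by
      rcases hM0.eq_or_lt with h0 | hpos
      · have hv0 : v = 0 := by
          funext i
          have := hvM i
          rw [← h0] at this
          exact abs_nonpos_iff.mp this
        have hc0 : c = 0 := by rw [hc, hv0, Matrix.mulVec_zero]
        rw [hc0, ← h0]; simp
      · have hmem : M⁻¹ * ∑ j, |c j| ∈ A := by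
          refine ⟨M⁻¹ • v, fun i => ?_, ?_⟩
          · rw [Pi.smul_apply, smul_eq_mul, abs_mul, abs_of_pos (inv_pos.mpr hpos),
              inv_mul_le_iff₀ hpos, mul_one]
            exact hvM i
          · rw [Matrix.mulVec_smul, Finset.mul_sum]
            refine Finset.sum_congr rfl fun i _ => ?_
            rw [Pi.smul_apply, smul_eq_mul, abs_mul, abs_of_pos (inv_pos.mpr hpos)]
        have h := le_csSup hAb hmem
        rw [inv_mul_le_iff₀ hpos] at h
        linarith
    have hsq : ‖∑ j, c j • Φ (𝒳 j)‖ ^ 2 ≤ sSup A * M ^ 2 := by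
      have h1 : ‖∑ j, c j • Φ (𝒳 j)‖ ^ 2 = ∑ j, c j * v j := by
        rw [← real_inner_self_eq_norm_sq]
        conv_lhs => rw [inner_sum]
        refine Finset.sum_congr rfl fun j _ => ?_
        rw [real_inner_smul_right, hc, hinner v j]
      rw [h1]
      calc ∑ j, c j * v j ≤ ∑ j, |c j| * M := by
            refine Finset.sum_le_sum fun j _ => ?_
            refine (le_abs_self _).trans ?_
            rw [abs_mul]
            exact mul_le_mul_of_nonneg_left (hvM j) (abs_nonneg _)
        _ = (∑ j, |c j|) * M := by rw [Finset.sum_mul]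
        _ ≤ (sSup A * M) * M := mul_le_mul_of_nonneg_right hcs hM0
        _ = sSup A * M ^ 2 := by ring
    refine (sq_le_sq₀ (norm_nonneg _) (by positivity)).mp ?_
    rw [mul_pow, Real.sq_sqrt hA0]
    exact hsq
  · intro g
    set s : H := ∑ j, (K⁻¹ *ᵥ fun i => ev g (𝒳 i)) j • Φ (𝒳 j) with hs
    have hΦ : ∀ i, Φ (𝒳 i) ∈ V := fun i => by
      rw [hV]; exact Submodule.subset_span ⟨i, rfl⟩
    have hsV : s ∈ V := Submodule.sum_mem _ fun j _ => V.smul_mem _ (hΦ j)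
    have horth : ∀ w ∈ V, ⟪s - S g, w⟫ = (0 : ℝ) := by
      intro w hw
      rw [hV] at hw
      induction hw using Submodule.span_induction with
      | mem x hx =>
        obtain ⟨i, rfl⟩ := hx
        have h1 := hSorth g _ (hΦ i)
        have h2 := hinner (fun i => ev g (𝒳 i)) i
        have h3 := hN.repro g (𝒳 i)
        rw [inner_sub_left] at h1 ⊢
        simp only [← hs] at h2
        linarith
      | zero => simp
      | add x y _ _ hx hy => rw [inner_add_right, hx, hy, add_zero]
      | smul a x _ hx => rw [real_inner_smul_right, hx, mul_zero]
    have h := horth _ (V.sub_mem hsV (hSmem g))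
    exact sub_eq_zero.mp (inner_self_eq_zero.mp h)
end

section
/- Let X and Y be sets, let k_X and k_Y be symmetric positive definite kernels on X and Y with native spaces N(X) and N(Y) respectively, and let A : X → Y be a map. Assume the invariance condition: for every f ∈ N(Y) the composition f ∘ A belongs to N(X). Then the Koopman operator K_A restricted to N(Y), i.e. the linear map N(Y) → N(X), f ↦ f ∘ A, is bounded: there exists C ≥ 0 such that ‖f ∘ A‖_{N(X)} ≤ C ‖f‖_{N(Y)} for all f ∈ N(Y). -/
open scoped RealInnerProductSpace

/-- `k` is a symmetric positive definite kernel (all kernel matrices are positive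
semidefinite). -/
def IsPosDefKernel {X : Type*} (k : X → X → ℝ) : Prop :=
  (∀ x y, k x y = k y x) ∧
  ∀ (n : ℕ) (x : Fin n → X) (c : Fin n → ℝ),
    0 ≤ ∑ i, ∑ j, c i * c j * k (x i) (x j)

/-- if the Koopman operator `f ↦ f ∘ A` maps the native space `N(Y)` into the
native space `N(X)`, then its restriction `N(Y) → N(X)` is a bounded operator. -/
theorem koopman_bounded_on_native_spaces
    {X Y HX HY : Type*}
    [NormedAddCommGroup HX] [InnerProductSpace ℝ HX] [CompleteSpace HX]
    [NormedAddCommGroup HY] [InnerProductSpace ℝ HY] [CompleteSpace HY]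
    (kX : X → X → ℝ) (evX : HX →ₗ[ℝ] (X → ℝ)) (Φ : X → HX)
    (kY : Y → Y → ℝ) (evY : HY →ₗ[ℝ] (Y → ℝ)) (Ψ : Y → HY)
    (hNX : IsNativeSpace kX evX Φ) (hNY : IsNativeSpace kY evY Ψ)
    (hkX : IsPosDefKernel kX) (hkY : IsPosDefKernel kY)
    (A : X → Y)
    -- invariance: every `f ∘ A` with `f ∈ N(Y)` belongs to `N(X)`
    (hinv : ∀ f : HY, ∃ h : HX, evX h = fun x => evY f (A x)) :
    ∃ C : ℝ, 0 ≤ C ∧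
      ∀ (f : HY) (h : HX), (evX h = fun x => evY f (A x)) → ‖h‖ ≤ C * ‖f‖ := by
  choose T hT using hinv
  let L : HY →ₗ[ℝ] HX :=
    { toFun := T
      map_add' := fun f g => hNX.injective (by
        rw [map_add, hT, hT, hT]; funext x; simp)
      map_smul' := fun c f => hNX.injective (by
        rw [map_smul, hT, hT]; funext x; simp) }
  have hL : ∀ f x, ⟪L f, Φ x⟫ = ⟪f, Ψ (A x)⟫ := fun f x => by
    rw [← hNX.repro, ← hNY.repro]
    exact congrFun (hT f) x
  have hcont : Continuous L := by
    apply LinearMap.continuous_of_seq_closed_graph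
    intro u f g hu hg
    apply hNX.injective
    funext x
    rw [hNX.repro, hNX.repro, hL]
    have h1 : Filter.Tendsto (fun n => ⟪L (u n), Φ x⟫) Filter.atTop (nhds ⟪g, Φ x⟫) :=
      Filter.Tendsto.inner hg tendsto_const_nhds
    have h2 : Filter.Tendsto (fun n => ⟪u n, Ψ (A x)⟫) Filter.atTop (nhds ⟪f, Ψ (A x)⟫) :=
      Filter.Tendsto.inner hu tendsto_const_nhds
    simp only [hL] at h1
    exact tendsto_nhds_unique h1 h2
  let M : HY →L[ℝ] HX := ⟨L, hcont⟩
  refine ⟨‖M‖, norm_nonneg _, fun f h hh => ?_⟩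
  have : h = M f := hNX.injective (hh.trans (hT f).symm)
  rw [this]
  exact M.le_opNorm f
end

section
/- Let k_X and k_Y be strictly positive definite symmetric kernels on X and Y with native spaces N(X), N(Y), let A : X → Y be a map with f ∘ A ∈ N(X) for all f ∈ N(Y), let 𝒳 = {x_1,…,x_N} ⊂ X and 𝒴 = {y_1,…,y_M} ⊂ Y be sets of pairwise distinct centers, and let S_𝒳, S_𝒴 denote the orthogonal projections of N(X) onto V_𝒳 and of N(Y) onto V_𝒴, respectively. Then S_𝒳((S_𝒴 f) ∘ A) = S_𝒳(f ∘ A) holds for all f ∈ N(Y) if and only if {A(x_1),…,A(x_N)} ⊆ {y_1,…,y_M}. -/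
open scoped RealInnerProductSpace

/-- `S_𝒳 K_A S_𝒴 = S_𝒳 K_A` on `N(Y)` if and only if `A(𝒳) ⊆ 𝒴`.
The Koopman images `(S_𝒴 f) ∘ A` and `f ∘ A` are represented by their (unique)
preimages `h₁, h₂ ∈ N(X)` under `ev_X`. -/
theorem kEDMD_projection_equality_iff_image_subset
    {X Y HX HY : Type*}
    [NormedAddCommGroup HX] [InnerProductSpace ℝ HX] [CompleteSpace HX]
    [NormedAddCommGroup HY] [InnerProductSpace ℝ HY] [CompleteSpace HY]
    (kX : X → X → ℝ) (evX : HX →ₗ[ℝ] (X → ℝ)) (Φ : X → HX)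
    (kY : Y → Y → ℝ) (evY : HY →ₗ[ℝ] (Y → ℝ)) (Ψ : Y → HY)
    (hNX : IsNativeSpace kX evX Φ) (hNY : IsNativeSpace kY evY Ψ)
    (hkX : IsStrictPosDefKernel kX) (hkY : IsStrictPosDefKernel kY)
    (A : X → Y)
    -- invariance: every `f ∘ A` with `f ∈ N(Y)` belongs to `N(X)`
    (hinv : ∀ f : HY, ∃ h : HX, evX h = fun x => evY f (A x))
    {N M : ℕ} (𝒳 : Fin N → X) (h𝒳 : Function.Injective 𝒳)
    (𝒴 : Fin M → Y) (h𝒴 : Function.Injective 𝒴)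
    (VX : Submodule ℝ HX) (hVX : VX = Submodule.span ℝ (Set.range fun i => Φ (𝒳 i)))
    (VY : Submodule ℝ HY) (hVY : VY = Submodule.span ℝ (Set.range fun j => Ψ (𝒴 j)))
    -- `SX`, `SY` are the orthogonal projections onto `VX`, `VY`
    (SX : HX → HX) (hSXmem : ∀ f, SX f ∈ VX)
    (hSXorth : ∀ f, ∀ v ∈ VX, ⟪f - SX f, v⟫ = (0 : ℝ))
    (SY : HY → HY) (hSYmem : ∀ f, SY f ∈ VY)
    (hSYorth : ∀ f, ∀ v ∈ VY, ⟪f - SY f, v⟫ = (0 : ℝ)) :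
    (∀ (f : HY) (h₁ h₂ : HX),
        (evX h₁ = fun x => evY (SY f) (A x)) →
        (evX h₂ = fun x => evY f (A x)) →
        SX h₁ = SX h₂) ↔
      ∀ i, ∃ j, A (𝒳 i) = 𝒴 j := by
  have hkeyX : ∀ (h : HX) (i : Fin N), evX (SX h) (𝒳 i) = evX h (𝒳 i) := by
    intro h i
    have h0 := hSXorth h (Φ (𝒳 i)) (by rw [hVX]; exact Submodule.subset_span ⟨i, rfl⟩)
    rw [inner_sub_left, ← hNX.repro, ← hNX.repro] at h0
    linarith
  have hkeyY : ∀ (h : HY) (i : Fin M), evY (SY h) (𝒴 i) = evY h (𝒴 i) := by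
    intro h i
    have h0 := hSYorth h (Ψ (𝒴 i)) (by rw [hVY]; exact Submodule.subset_span ⟨i, rfl⟩)
    rw [inner_sub_left, ← hNY.repro, ← hNY.repro] at h0
    linarith
  constructor
  · intro H i
    by_contra hcon
    push Not at hcon
    set z := A (𝒳 i) with hz
    obtain ⟨h₁, e₁⟩ := hinv (SY (Ψ z))
    obtain ⟨h₂, e₂⟩ := hinv (Ψ z)
    have hS := H (Ψ z) h₁ h₂ e₁ e₂
    have hval : evY (SY (Ψ z)) z = evY (Ψ z) z := by
      have a := hkeyX h₁ i
      have b := hkeyX h₂ i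
      rw [hS, b, e₁, e₂] at a
      exact a.symm
    have hg : Ψ z - SY (Ψ z) = 0 := by
      rw [← inner_self_eq_zero (𝕜 := ℝ), inner_sub_right, hSYorth _ _ (hSYmem _), inner_sub_left,
        ← hNY.repro, ← hNY.repro, hval]
      ring
    have hmem : Ψ z ∈ Submodule.span ℝ (Set.range fun j => Ψ (𝒴 j)) := by
      rw [sub_eq_zero.mp hg, ← hVY]; exact hSYmem _
    obtain ⟨c, hc⟩ := (Submodule.mem_span_range_iff_exists_fun ℝ).1 hmem
    have hinj : Function.Injective (Fin.cons z 𝒴 : Fin (M+1) → Y) := by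
      rw [Fin.cons_injective_iff]
      refine ⟨?_, h𝒴⟩
      rintro ⟨j, hj⟩
      exact hcon j hj.symm
    have hpd := hkY.2 (M+1) _ hinj
    have hv : (Fin.cons 1 (fun j => - c j) : Fin (M+1) → ℝ) ≠ 0 := by
      intro h
      have := congrFun h 0
      simp at this
    have hpos := hpd.dotProduct_mulVec_pos hv
    have hzero : (Matrix.of fun i j : Fin (M+1) => kY ((Fin.cons z 𝒴 : Fin (M+1) → Y) i)
        ((Fin.cons z 𝒴 : Fin (M+1) → Y) j)).mulVec
        (Fin.cons 1 (fun j => - c j) : Fin (M+1) → ℝ) = 0 := by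
      funext p
      have h1 := congrArg (fun f => evY f ((Fin.cons z 𝒴 : Fin (M+1) → Y) p)) hc
      simp only [map_sum, map_smul, Finset.sum_apply, Pi.smul_apply, hNY.feature,
        smul_eq_mul] at h1
      simp only [Matrix.mulVec, dotProduct, Matrix.of_apply, Fin.sum_univ_succ (n := M),
        Fin.cons_zero, Fin.cons_succ, Pi.zero_apply, ← h1, mul_neg, Finset.sum_neg_distrib,
        mul_one, mul_comm (c _)]
      ring
    rw [hzero] at hpos
    simp at hpos
  · intro H f h₁ h₂ e₁ e₂
    have hval : ∀ i, evX h₁ (𝒳 i) = evX h₂ (𝒳 i) := by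
      intro i
      obtain ⟨j, hj⟩ := H i
      rw [e₁, e₂]
      simp only [hj]
      exact hkeyY f j
    have horth : ∀ v ∈ VX, ⟪SX h₁ - SX h₂, v⟫ = (0 : ℝ) := by
      intro v hv
      rw [hVX] at hv
      induction hv using Submodule.span_induction with
      | mem x hx =>
        obtain ⟨i, rfl⟩ := hx
        simp only
        rw [inner_sub_left, ← hNX.repro, ← hNX.repro, hkeyX, hkeyX, hval, sub_self]
      | zero => simp
      | add x y _ _ hx hy => rw [inner_add_right, hx, hy, add_zero]
      | smul a x _ hx => rw [inner_smul_right, hx, mul_zero]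
    exact sub_eq_zero.mp (inner_self_eq_zero.mp
      (horth _ (VX.sub_mem (hSXmem h₁) (hSXmem h₂))))
end

section
/- Let k_X and k_Y be bounded strictly positive definite symmetric kernels on X and Y with native spaces N(X), N(Y), let A : X → Y be a map, let 𝒳 ⊂ X and 𝒴 ⊂ Y be sets of pairwise distinct centers with orthogonal projections S_𝒳 : N(X) → V_𝒳 and S_𝒴 : N(Y) → V_𝒴. Assume g ∘ A ∈ N(X) for every g ∈ V_𝒴, that C_S ≥ 0 satisfies sup_{x∈X} |g(x) − (S_𝒳 g)(x)| ≤ C_S ‖g‖_{N(X)} for all g ∈ N(X), and that C_K ≥ 0 satisfies ‖g ∘ A‖_{N(X)} ≤ C_K ‖g‖_{N(Y)} for all g ∈ V_𝒴. Then for every f ∈ N(Y) the approximant K̂_A^𝒴 f := S_𝒳((S_𝒴 f) ∘ A) satisfies sup_{x∈X} |f(A(x)) − (K̂_A^𝒴 f)(x)| ≤ sup_{y∈Y} |f(y) − (S_𝒴 f)(y)| + C_S · C_K · ‖S_𝒴 f‖_{N(Y)}. -/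
open scoped RealInnerProductSpace

/-- uniform error bound for the approximant `K̂_A^𝒴 f = S_𝒳((S_𝒴 f) ∘ A)`:
`sup_x |f(A(x)) − (K̂_A^𝒴 f)(x)| ≤ sup_y |f(y) − (S_𝒴 f)(y)| + C_S · C_K · ‖S_𝒴 f‖`.
Here `h` denotes the (unique) element of `N(X)` with `ev_X h = (S_𝒴 f) ∘ A`. -/
theorem kEDMD_two_projections_uniform_error_bound
    {X Y HX HY : Type*}
    [NormedAddCommGroup HX] [InnerProductSpace ℝ HX] [CompleteSpace HX]
    [NormedAddCommGroup HY] [InnerProductSpace ℝ HY] [CompleteSpace HY]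
    (kX : X → X → ℝ) (evX : HX →ₗ[ℝ] (X → ℝ)) (Φ : X → HX)
    (kY : Y → Y → ℝ) (evY : HY →ₗ[ℝ] (Y → ℝ)) (Ψ : Y → HY)
    (hNX : IsNativeSpace kX evX Φ) (hNY : IsNativeSpace kY evY Ψ)
    (hkX : IsStrictPosDefKernel kX) (hkY : IsStrictPosDefKernel kY)
    -- the kernels are bounded
    (hkXb : ∃ C, ∀ x x', |kX x x'| ≤ C) (hkYb : ∃ C, ∀ y y', |kY y y'| ≤ C)
    (A : X → Y)
    {N M : ℕ} (𝒳 : Fin N → X) (h𝒳 : Function.Injective 𝒳)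
    (𝒴 : Fin M → Y) (h𝒴 : Function.Injective 𝒴)
    (VX : Submodule ℝ HX) (hVX : VX = Submodule.span ℝ (Set.range fun i => Φ (𝒳 i)))
    (VY : Submodule ℝ HY) (hVY : VY = Submodule.span ℝ (Set.range fun j => Ψ (𝒴 j)))
    -- every `g ∘ A` with `g ∈ V_𝒴` belongs to `N(X)`
    (hinv : ∀ g ∈ VY, ∃ h : HX, evX h = fun x => evY g (A x))
    -- `SX`, `SY` are the orthogonal projections onto `VX`, `VY`
    (SX : HX → HX) (hSXmem : ∀ f, SX f ∈ VX)
    (hSXorth : ∀ f, ∀ v ∈ VX, ⟪f - SX f, v⟫ = (0 : ℝ))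
    (SY : HY → HY) (hSYmem : ∀ f, SY f ∈ VY)
    (hSYorth : ∀ f, ∀ v ∈ VY, ⟪f - SY f, v⟫ = (0 : ℝ))
    (CS : ℝ) (hCS : 0 ≤ CS)
    (hCSbound : ∀ (g : HX) (x : X), |evX g x - evX (SX g) x| ≤ CS * ‖g‖)
    (CK : ℝ) (hCK : 0 ≤ CK)
    (hCKbound : ∀ g ∈ VY, ∀ h : HX, (evX h = fun x => evY g (A x)) → ‖h‖ ≤ CK * ‖g‖) :
    ∀ (f : HY) (h : HX), (evX h = fun x => evY (SY f) (A x)) →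
      ∀ x : X, |evY f (A x) - evX (SX h) x| ≤
        (⨆ y : Y, |evY f y - evY (SY f) y|) + CS * CK * ‖SY f‖ := by
  intro f h hh x
  obtain ⟨C, hC⟩ := hkYb
  have hbdd : BddAbove (Set.range fun y : Y => |evY f y - evY (SY f) y|) := by
    refine ⟨‖f - SY f‖ * Real.sqrt C, ?_⟩
    rintro _ ⟨y, rfl⟩
    have e : evY f y - evY (SY f) y = ⟪f - SY f, Ψ y⟫ := by
      rw [hNY.repro, hNY.repro, inner_sub_left]
    have hn : ‖Ψ y‖ ≤ Real.sqrt C := by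
      apply Real.le_sqrt_of_sq_le
      rw [← real_inner_self_eq_norm_sq, ← hNY.repro, hNY.feature]
      exact (le_abs_self _).trans (hC y y)
    simp only [e]
    exact (abs_real_inner_le_norm _ _).trans
      (mul_le_mul_of_nonneg_left hn (norm_nonneg _))
  have h1 : |evY f (A x) - evY (SY f) (A x)| ≤ ⨆ y : Y, |evY f y - evY (SY f) y| :=
    le_ciSup hbdd (A x)
  have h2 := hCSbound h x
  have h3 := mul_le_mul_of_nonneg_left (hCKbound _ (hSYmem f) h hh) hCS
  have h4 : evX h x = evY (SY f) (A x) := congrFun hh x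
  rw [h4] at h2
  have h5 := abs_sub_le (evY f (A x)) (evY (SY f) (A x)) (evX (SX h) x)
  rw [← mul_assoc] at h3
  linarith
end

section
/- Let k be a strictly positive definite symmetric kernel on a set X with native space N(X), A : X → X a map, 𝒳 = {x_1,…,x_N} ⊂ X pairwise distinct centers, and define K̂_A g := S̃_𝒳(g ∘ A) for bounded g : X → ℝ. Then for every n ≥ 1 and every bounded f : X → ℝ, the n-fold iterate satisfies K̂_A^n f = Σ_{j=1}^N ((K_{𝒳,𝒳}^{-1} K_{A(𝒳),𝒳})^{n-1} K_{𝒳,𝒳}^{-1} (f∘A)_𝒳)_j Φ_{x_j}, where (K_{A(𝒳),𝒳})_{ij} := k(A(x_i), x_j) and (f∘A)_𝒳 := (f(A(x_1)),…,f(A(x_N)))^T. -/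
open scoped RealInnerProductSpace
open Matrix

/-- the `n`-fold iterate of the kEDMD operator `K̂_A g = S̃_𝒳(g ∘ A)`
on bounded functions satisfies
`K̂_A^n f = ∑ j ((K_{𝒳,𝒳}⁻¹ K_{A(𝒳),𝒳})^{n-1} K_{𝒳,𝒳}⁻¹ (f∘A)_𝒳)_j Φ_{x_j}`. -/
theorem kEDMD_multistep_matrix_formula
    {X H : Type*} [NormedAddCommGroup H] [InnerProductSpace ℝ H] [CompleteSpace H]
    (k : X → X → ℝ) (ev : H →ₗ[ℝ] (X → ℝ)) (Φ : X → H)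
    (hN : IsNativeSpace k ev Φ) (hk : IsStrictPosDefKernel k)
    -- the kernel is bounded
    (hkb : ∃ C, ∀ x x', |k x x'| ≤ C)
    (A : X → X)
    {N : ℕ} (𝒳 : Fin N → X) (h𝒳 : Function.Injective 𝒳)
    (K : Matrix (Fin N) (Fin N) ℝ) (hK : ∀ i j, K i j = k (𝒳 i) (𝒳 j))
    (KA : Matrix (Fin N) (Fin N) ℝ) (hKA : ∀ i j, KA i j = k (A (𝒳 i)) (𝒳 j)) :
    ∀ n : ℕ, 1 ≤ n → ∀ f : X → ℝ, (∃ B, ∀ x, |f x| ≤ B) →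
      (fun g : X → ℝ =>
          ev (∑ j, (K⁻¹ *ᵥ fun i => g (A (𝒳 i))) j • Φ (𝒳 j)))^[n] f =
        ev (∑ j, (((K⁻¹ * KA) ^ (n - 1) * K⁻¹) *ᵥ fun i => f (A (𝒳 i))) j
              • Φ (𝒳 j)) := by
  intro n hn f _
  obtain ⟨m, rfl⟩ : ∃ m, n = m + 1 := ⟨n - 1, by omega⟩
  clear hn
  induction m with
  | zero => simp
  | succ m ih =>
    rw [Function.iterate_succ_apply', ih]
    have key : ∀ c : Fin N → ℝ,
        (fun i => ev (∑ j, c j • Φ (𝒳 j)) (A (𝒳 i))) = KA *ᵥ c := by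
      intro c
      funext i
      simp [map_sum, Finset.sum_apply, hN.feature, Matrix.mulVec, dotProduct, hKA, mul_comm]
    simp only [Nat.add_sub_cancel]
    rw [key, Matrix.mulVec_mulVec, Matrix.mulVec_mulVec, pow_succ']
    simp only [Matrix.mul_assoc]
end

section
/- Let k be a bounded strictly positive definite symmetric kernel on a set X with native space N(X), let A : X → X be a map with f ∘ A ∈ N(X) for all f ∈ N(X), let 𝒳 ⊂ X be pairwise distinct centers with orthogonal projection S_𝒳 : N(X) → V_𝒳. Suppose C_S ≥ 0 satisfies sup_{x∈X} |g(x) − (S_𝒳 g)(x)| ≤ C_S ‖g‖_{N(X)} for all g ∈ N(X), and C_K ≥ 0 satisfies ‖f ∘ A‖_{N(X)} ≤ C_K ‖f‖_{N(X)} for all f ∈ N(X). Then for every n ≥ 1 and every f ∈ N(X), the n-step kEDMD prediction K̂_A^n f, where K̂_A f := S_𝒳(f ∘ A), satisfies sup_{x∈X} |(f ∘ A^{∘n})(x) − (K̂_A^n f)(x)| ≤ C_S · (Σ_{i=1}^n C_K^i) · ‖f‖_{N(X)}, where A^{∘n} denotes the n-fold composition of A. -/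
open scoped RealInnerProductSpace

/-- multi-step uniform error bound for the kEDMD prediction
`K̂_A^n f` with `K̂_A = S_𝒳 ∘ K_A`:
`sup_x |f(A^{∘n}(x)) − (K̂_A^n f)(x)| ≤ C_S (∑_{i=1}^n C_K^i) ‖f‖`.
Here `T : N(X) → N(X)` is the Koopman operator, i.e. `ev (T f) = (ev f) ∘ A`
(its totality encodes the invariance `f ∘ A ∈ N(X)` for all `f ∈ N(X)`). -/
theorem kEDMD_multistep_uniform_error_bound
    {X H : Type*} [NormedAddCommGroup H] [InnerProductSpace ℝ H] [CompleteSpace H]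
    (k : X → X → ℝ) (ev : H →ₗ[ℝ] (X → ℝ)) (Φ : X → H)
    (hN : IsNativeSpace k ev Φ) (hk : IsStrictPosDefKernel k)
    -- the kernel is bounded
    (hkb : ∃ C, ∀ x x', |k x x'| ≤ C)
    (A : X → X)
    -- the Koopman operator on the native space
    (T : H → H) (hT : ∀ (f : H) (x : X), ev (T f) x = ev f (A x))
    {N : ℕ} (𝒳 : Fin N → X) (h𝒳 : Function.Injective 𝒳)
    (V : Submodule ℝ H) (hV : V = Submodule.span ℝ (Set.range fun i => Φ (𝒳 i)))
    -- `S` is the orthogonal projection onto `V`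
    (S : H → H) (hSmem : ∀ f, S f ∈ V)
    (hSorth : ∀ f, ∀ v ∈ V, ⟪f - S f, v⟫ = (0 : ℝ))
    (CS : ℝ) (hCS : 0 ≤ CS)
    (hCSbound : ∀ (g : H) (x : X), |ev g x - ev (S g) x| ≤ CS * ‖g‖)
    (CK : ℝ) (hCK : 0 ≤ CK)
    (hCKbound : ∀ f : H, ‖T f‖ ≤ CK * ‖f‖) :
    ∀ n : ℕ, 1 ≤ n → ∀ (f : H) (x : X),
      |ev f (A^[n] x) - ev ((S ∘ T)^[n] f) x| ≤
        CS * (∑ i ∈ Finset.Icc 1 n, CK ^ i) * ‖f‖ := by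
  have hSn : ∀ g, ‖S g‖ ≤ ‖g‖ := by
    intro g
    have h := hSorth g (S g) (hSmem g)
    rw [inner_sub_left, real_inner_self_eq_norm_sq] at h
    have h2 := real_inner_le_norm g (S g)
    by_contra! hc
    have h3 := norm_nonneg g
    nlinarith
  have hpow : ∀ (n : ℕ) (f : H), ‖(S ∘ T)^[n] f‖ ≤ CK ^ n * ‖f‖ := by
    intro n f
    induction n with
    | zero => simp
    | succ n ih =>
      rw [Function.iterate_succ_apply']
      calc ‖(S ∘ T) ((S ∘ T)^[n] f)‖ ≤ ‖T ((S ∘ T)^[n] f)‖ := hSn _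
        _ ≤ CK * ‖(S ∘ T)^[n] f‖ := hCKbound _
        _ ≤ CK * (CK ^ n * ‖f‖) := mul_le_mul_of_nonneg_left ih hCK
        _ = CK ^ (n + 1) * ‖f‖ := by ring
  intro n _ f
  clear * - hCS hCK hT hCSbound hCKbound hpow
  induction n with
  | zero => intro x; simp
  | succ n ih =>
    intro x
    rw [Function.iterate_succ_apply, Function.iterate_succ_apply',
      Finset.sum_Icc_succ_top (by omega)]
    have h1 := ih (A x)
    have h2 := hCSbound (T ((S ∘ T)^[n] f)) x
    rw [hT] at h2
    have h3 : CS * ‖T ((S ∘ T)^[n] f)‖ ≤ CS * (CK * (CK ^ n * ‖f‖)) :=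
      mul_le_mul_of_nonneg_left ((hCKbound _).trans
        (mul_le_mul_of_nonneg_left (hpow n f) hCK)) hCS
    have h4 := abs_sub_le (ev f (A^[n] (A x))) (ev ((S ∘ T)^[n] f) (A x))
      (ev ((S ∘ T) ((S ∘ T)^[n] f)) x)
    refine h4.trans ((add_le_add h1 (h2.trans h3)).trans (le_of_eq ?_))
    ring
end

section
/- Let k be a bounded strictly positive definite symmetric kernel on a set X with native space N(X), let A : X → X be a map with f ∘ A ∈ N(X) for all f ∈ N(X), let 𝒳 ⊂ X be pairwise distinct centers with orthogonal projection S_𝒳 : N(X) → V_𝒳. Suppose C_S ≥ 0 satisfies sup_{x∈X} |g(x) − (S_𝒳 g)(x)| ≤ C_S ‖g‖_{N(X)} for all g ∈ N(X), and C_K ≥ 0 satisfies ‖f ∘ A‖_{N(X)} ≤ C_K ‖f‖_{N(X)} for all f ∈ N(X). Then for every n ≥ 1 and every f ∈ N(X), the n-fold iterate of the approximant K̂_A^𝒳 f := S_𝒳((S_𝒳 f) ∘ A) satisfies sup_{x∈X} |(f ∘ A^{∘n})(x) − ((K̂_A^𝒳)^n f)(x)| ≤ C_S · (Σ_{i=0}^n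 C_K^i) · ‖f‖_{N(X)}, where A^{∘n} denotes the n-fold composition of A. -/
open scoped RealInnerProductSpace

/-- multi-step uniform error bound for the iterates of the approximant
`K̂_A^𝒳 = S_𝒳 ∘ K_A ∘ S_𝒳`:
`sup_x |f(A^{∘n}(x)) − ((K̂_A^𝒳)^n f)(x)| ≤ C_S (∑_{i=0}^n C_K^i) ‖f‖`.
Here `T : N(X) → N(X)` is the Koopman operator, i.e. `ev (T f) = (ev f) ∘ A`
(its totality encodes the invariance `f ∘ A ∈ N(X)` for all `f ∈ N(X)`). -/
theorem kEDMD_multistep_uniform_error_bound_with_projection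
    {X H : Type*} [NormedAddCommGroup H] [InnerProductSpace ℝ H] [CompleteSpace H]
    (k : X → X → ℝ) (ev : H →ₗ[ℝ] (X → ℝ)) (Φ : X → H)
    (hN : IsNativeSpace k ev Φ) (hk : IsStrictPosDefKernel k)
    -- the kernel is bounded
    (hkb : ∃ C, ∀ x x', |k x x'| ≤ C)
    (A : X → X)
    -- the Koopman operator on the native space
    (T : H → H) (hT : ∀ (f : H) (x : X), ev (T f) x = ev f (A x))
    {N : ℕ} (𝒳 : Fin N → X) (h𝒳 : Function.Injective 𝒳)
    (V : Submodule ℝ H) (hV : V = Submodule.span ℝ (Set.range fun i => Φ (𝒳 i)))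
    -- `S` is the orthogonal projection onto `V`
    (S : H → H) (hSmem : ∀ f, S f ∈ V)
    (hSorth : ∀ f, ∀ v ∈ V, ⟪f - S f, v⟫ = (0 : ℝ))
    (CS : ℝ) (hCS : 0 ≤ CS)
    (hCSbound : ∀ (g : H) (x : X), |ev g x - ev (S g) x| ≤ CS * ‖g‖)
    (CK : ℝ) (hCK : 0 ≤ CK)
    (hCKbound : ∀ f : H, ‖T f‖ ≤ CK * ‖f‖) :
    ∀ n : ℕ, 1 ≤ n → ∀ (f : H) (x : X),
      |ev f (A^[n] x) - ev ((fun g => S (T (S g)))^[n] f) x| ≤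
        CS * (∑ i ∈ Finset.range (n + 1), CK ^ i) * ‖f‖ := by
  have hnorm : ∀ f, ‖S f‖ ≤ ‖f‖ := by
    intro f
    have h := hSorth f (S f) (hSmem f)
    have h2 : ‖f‖ * ‖f‖ = ‖f - S f‖ * ‖f - S f‖ + ‖S f‖ * ‖S f‖ := by
      have := norm_add_sq_eq_norm_sq_add_norm_sq_of_inner_eq_zero (f - S f) (S f) h
      simpa using this
    nlinarith [norm_nonneg f, norm_nonneg (S f), mul_self_nonneg ‖f - S f‖]
  have hfix : ∀ f ∈ V, S f = f := by
    intro f hf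
    have h := hSorth f (f - S f) (V.sub_mem hf (hSmem f))
    have h0 := inner_self_eq_zero.mp h
    exact (sub_eq_zero.mp h0).symm
  have key : ∀ n : ℕ, ∀ f ∈ V, ∀ x : X,
      |ev f (A^[n] x) - ev ((fun g => S (T (S g)))^[n] f) x| ≤
        CS * (∑ i ∈ Finset.range n, CK ^ (i + 1)) * ‖f‖ := by
    intro n
    induction n with
    | zero => intro f hf x; simp
    | succ n ih =>
      intro f hf x
      have h1 := ih (S (T f)) (hSmem _) x
      have h2 := hCSbound (T f) (A^[n] x)
      have h3 : ev f (A^[n+1] x) = ev (T f) (A^[n] x) := by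
        rw [hT, Function.iterate_succ_apply']
      rw [h3, Function.iterate_succ_apply]
      simp only [hfix f hf]
      have h4 : (∑ i ∈ Finset.range (n+1), CK ^ (i + 1))
          = CK * (∑ i ∈ Finset.range n, CK ^ (i + 1)) + CK := by
        rw [Finset.sum_range_succ', Finset.mul_sum]
        simp [pow_succ']
      have h5 : 0 ≤ CS * ∑ i ∈ Finset.range n, CK ^ (i + 1) := by positivity
      have h6 := mul_le_mul_of_nonneg_left ((hnorm (T f)).trans (hCKbound f)) h5
      have h7 := mul_le_mul_of_nonneg_left (hCKbound f) hCS
      refine (abs_sub_le _ (ev (S (T f)) (A^[n] x)) _).trans ?_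
      rw [h4]
      linarith
  intro n hn f x
  obtain ⟨m, rfl⟩ : ∃ m, n = m + 1 := ⟨n - 1, by omega⟩
  have h1 := key (m+1) (S f) (hSmem f) x
  have h2 := hCSbound f (A^[m+1] x)
  have h3 : (fun g => S (T (S g)))^[m+1] (S f) = (fun g => S (T (S g)))^[m+1] f := by
    rw [Function.iterate_succ_apply, Function.iterate_succ_apply]
    simp only [hfix (S f) (hSmem f)]
  rw [h3] at h1
  have h5 : 0 ≤ CS * ∑ i ∈ Finset.range (m+1), CK ^ (i + 1) := by positivity
  have h6 := mul_le_mul_of_nonneg_left (hnorm f) h5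
  refine (abs_sub_le _ (ev (S f) (A^[m+1] x)) _).trans ?_
  rw [Finset.sum_range_succ' (fun i => CK ^ i) (m+1), pow_zero]
  linarith
end

section
/- Let Ω_X and Ω_Y be open subsets of ℝ^d, let A : Ω_X → Ω_Y be a C¹-diffeomorphism with inf_{x ∈ Ω_X} |det DA(x)| > 0, and set c₀ := sup_{x ∈ Ω_X} |det DA(x)|^{-1} and M := sup_{x ∈ Ω_X} ‖DA(x)‖_F² / |det DA(x)|, both assumed finite. Then for every continuously differentiable f : Ω_Y → ℝ with f and ∇f square-integrable on Ω_Y, both f ∘ A and ∇(f ∘ A) are square-integrable on Ω_X and ∫_{Ω_X} |f(A(x))|² dx + ∫_{Ω_X} ‖∇(f ∘ A)(x)‖² dx ≤ max{c₀, M} · ( ∫_{Ω_Y} |f(y)|² dy + ∫_{Ω_Y} ‖∇f(y)‖² dy ); i.e. the composition operator f ↦ f∘A is bounded with respect to the H¹-type norm with constant max{c₀, M}^{1/2}. -/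
open MeasureTheory

/-- The squared Frobenius norm of a continuous linear map on `ℝ^d` (the sum of the squares
of the entries of its matrix in the standard basis). -/
noncomputable def frobeniusNormSq {d : ℕ}
    (L : EuclideanSpace ℝ (Fin d) →L[ℝ] EuclideanSpace ℝ (Fin d)) : ℝ :=
  ∑ i, ∑ j, (L (EuclideanSpace.single j 1) i) ^ 2

theorem opNorm_sq_le_frob {d : ℕ}
    (L : EuclideanSpace ℝ (Fin d) →L[ℝ] EuclideanSpace ℝ (Fin d)) :
    ‖L‖ ^ 2 ≤ frobeniusNormSq L := by
  have h0 : 0 ≤ frobeniusNormSq L :=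
    Finset.sum_nonneg fun i _ => Finset.sum_nonneg fun j _ => sq_nonneg _
  have h : ‖L‖ ≤ Real.sqrt (frobeniusNormSq L) := by
    refine L.opNorm_le_bound (Real.sqrt_nonneg _) fun x => ?_
    refine abs_le_of_sq_le_sq' ?_ (by positivity) |>.2
    rw [mul_pow, Real.sq_sqrt h0, EuclideanSpace.real_norm_sq_eq, EuclideanSpace.real_norm_sq_eq,
      frobeniusNormSq, Finset.sum_mul]
    refine Finset.sum_le_sum fun i _ => ?_
    have hx : x = ∑ j, x j • EuclideanSpace.single j (1 : ℝ) := by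
      ext k
      simp [Pi.single_apply]
    have : L x i = ∑ j, L (EuclideanSpace.single j 1) i * x j := by
      conv_lhs => rw [hx]
      simp [map_sum, mul_comm]
    rw [this]
    exact Finset.sum_mul_sq_le_sq_mul_sq _ _ _
  calc ‖L‖ ^ 2 ≤ Real.sqrt (frobeniusNormSq L) ^ 2 := by gcongr
    _ = _ := Real.sq_sqrt h0

theorem change_bound {d : ℕ} {ΩX ΩY : Set (EuclideanSpace ℝ (Fin d))}
    (hΩX : IsOpen ΩX)
    {A : EuclideanSpace ℝ (Fin d) → EuclideanSpace ℝ (Fin d)}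
    (hA : ContDiffOn ℝ 1 A ΩX) (himg : A '' ΩX = ΩY) (hinj : Set.InjOn A ΩX)
    (K : ℝ) (g h : EuclideanSpace ℝ (Fin d) → ℝ) (hg : IntegrableOn g ΩY)
    (hcont : ContinuousOn h ΩX) (h0 : ∀ x, 0 ≤ h x)
    (hle : ∀ x ∈ ΩX, h x ≤ K * (|(fderiv ℝ A x).det| • g (A x))) :
    IntegrableOn h ΩX ∧ ∫ x in ΩX, h x ≤ K * ∫ y in ΩY, g y := by
  have hd : ∀ x ∈ ΩX, HasFDerivWithinAt A (fderiv ℝ A x) ΩX x := fun x hx =>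
    ((hA.contDiffAt (hΩX.mem_nhds hx)).differentiableAt one_ne_zero).hasFDerivAt.hasFDerivWithinAt
  have hm := hΩX.measurableSet
  rw [← himg] at hg ⊢
  have hi := ((integrableOn_image_iff_integrableOn_abs_det_fderiv_smul volume hm hd hinj g).1
    hg).const_mul K
  have hh : IntegrableOn h ΩX := by
    refine Integrable.mono' hi (hcont.aestronglyMeasurable hm) ?_
    filter_upwards [ae_restrict_mem hm] with x hx
    rw [Real.norm_of_nonneg (h0 x)]
    exact hle x hx
  refine ⟨hh, ?_⟩
  rw [integral_image_eq_integral_abs_det_fderiv_smul volume hm hd hinj g, ← integral_const_mul]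
  exact setIntegral_mono_on hh hi hm hle

/-- for a C¹-diffeomorphism `A : Ω_X → Ω_Y` with
`|det DA(x)|⁻¹ ≤ c₀` and `‖DA(x)‖_F² / |det DA(x)| ≤ M` on `Ω_X`, and any C¹ function `f`
on `Ω_Y` with `f` and `∇f` square-integrable, both `f ∘ A` and `∇(f ∘ A)` are
square-integrable on `Ω_X` and
`∫_{Ω_X} |f∘A|² + ∫_{Ω_X} ‖∇(f∘A)‖² ≤ max{c₀, M} (∫_{Ω_Y} |f|² + ∫_{Ω_Y} ‖∇f‖²)`,
i.e. the composition operator is `H¹`-bounded with constant `max{c₀, M}^{1/2}`. -/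
theorem koopman_H1_bound
    {d : ℕ} (ΩX ΩY : Set (EuclideanSpace ℝ (Fin d)))
    (hΩX : IsOpen ΩX) (hΩY : IsOpen ΩY)
    (A B : EuclideanSpace ℝ (Fin d) → EuclideanSpace ℝ (Fin d))
    -- `A : Ω_X → Ω_Y` is a C¹-diffeomorphism with inverse `B`
    (hA : ContDiffOn ℝ 1 A ΩX) (hB : ContDiffOn ℝ 1 B ΩY)
    (hAmaps : Set.MapsTo A ΩX ΩY) (hBmaps : Set.MapsTo B ΩY ΩX)
    (hBA : ∀ x ∈ ΩX, B (A x) = x) (hAB : ∀ y ∈ ΩY, A (B y) = y)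
    -- `inf_{x ∈ Ω_X} |det DA(x)| > 0`
    (c : ℝ) (hc : 0 < c) (hdet : ∀ x ∈ ΩX, c ≤ |(fderiv ℝ A x).det|)
    -- `c₀` bounds `|det DA(x)|⁻¹` and `M` bounds `‖DA(x)‖_F² / |det DA(x)|` on `Ω_X`
    (c₀ M : ℝ)
    (hc₀ : ∀ x ∈ ΩX, |(fderiv ℝ A x).det|⁻¹ ≤ c₀)
    (hM : ∀ x ∈ ΩX, frobeniusNormSq (fderiv ℝ A x) / |(fderiv ℝ A x).det| ≤ M)
    -- `f` is C¹ on `Ω_Y`, square-integrable with square-integrable gradient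
    (f : EuclideanSpace ℝ (Fin d) → ℝ)
    (hf : ContDiffOn ℝ 1 f ΩY)
    (hf2 : IntegrableOn (fun y => f y ^ 2) ΩY)
    (hgrad : IntegrableOn (fun y => ‖fderiv ℝ f y‖ ^ 2) ΩY) :
    IntegrableOn (fun x => f (A x) ^ 2) ΩX ∧
    IntegrableOn (fun x => ‖fderiv ℝ (f ∘ A) x‖ ^ 2) ΩX ∧
    (∫ x in ΩX, f (A x) ^ 2) + ∫ x in ΩX, ‖fderiv ℝ (f ∘ A) x‖ ^ 2 ≤
      max c₀ M * ((∫ y in ΩY, f y ^ 2) + ∫ y in ΩY, ‖fderiv ℝ f y‖ ^ 2) := by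
  have himg : A '' ΩX = ΩY := by
    ext y
    constructor
    · rintro ⟨x, hx, rfl⟩
      exact hAmaps hx
    · exact fun hy => ⟨B y, hBmaps hy, hAB y hy⟩
  have hinj : Set.InjOn A ΩX := fun x hx y hy hxy => by
    rw [← hBA x hx, hxy, hBA y hy]
  have hfA : ContDiffOn ℝ 1 (f ∘ A) ΩX := hf.comp hA hAmaps
  have hpos : ∀ x ∈ ΩX, 0 < |(fderiv ℝ A x).det| := fun x hx => hc.trans_le (hdet x hx)
  obtain ⟨h1, h1'⟩ := change_bound hΩX hA himg hinj (max c₀ M) (fun y => f y ^ 2)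
    (fun x => f (A x) ^ 2) hf2 (hfA.continuousOn.pow 2) (fun x => sq_nonneg _) (by
      intro x hx
      have h2 := (hc₀ x hx).trans (le_max_left c₀ M)
      rw [inv_le_iff_one_le_mul₀ (hpos x hx)] at h2
      rw [smul_eq_mul, ← mul_assoc]
      exact le_mul_of_one_le_left (sq_nonneg _) h2)
  obtain ⟨h2, h2'⟩ := change_bound hΩX hA himg hinj (max c₀ M) (fun y => ‖fderiv ℝ f y‖ ^ 2)
    (fun x => ‖fderiv ℝ (f ∘ A) x‖ ^ 2) hgrad
    ((hfA.continuousOn_fderiv_of_isOpen hΩX le_rfl).norm.pow 2) (fun x => sq_nonneg _) (by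
      intro x hx
      have h2 := (hM x hx).trans (le_max_right c₀ M)
      rw [div_le_iff₀ (hpos x hx)] at h2
      have hch : fderiv ℝ (f ∘ A) x = (fderiv ℝ f (A x)).comp (fderiv ℝ A x) :=
        fderiv_comp x
          ((hf.contDiffAt (hΩY.mem_nhds (hAmaps hx))).differentiableAt one_ne_zero)
          ((hA.contDiffAt (hΩX.mem_nhds hx)).differentiableAt one_ne_zero)
      rw [smul_eq_mul, ← mul_assoc, hch]
      calc ‖(fderiv ℝ f (A x)).comp (fderiv ℝ A x)‖ ^ 2
          ≤ (‖fderiv ℝ f (A x)‖ * ‖fderiv ℝ A x‖) ^ 2 := by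
            gcongr
            exact ContinuousLinearMap.opNorm_comp_le _ _
        _ = ‖fderiv ℝ A x‖ ^ 2 * ‖fderiv ℝ f (A x)‖ ^ 2 := by ring
        _ ≤ _ := by
            gcongr
            exact (opNorm_sq_le_frob _).trans h2)
  refine ⟨h1, h2, ?_⟩
  rw [mul_add]
  exact add_le_add h1' h2'
end
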